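/- Assume the discounted ARE has a unique symmetric positive semidefinite solution X* with stabilizing gain F* := −γ(R + γB'X*B)⁻¹B'X*A satisfying ρ(A + BF*) < 1, define P* := [[Q + γA'X*A, γA'X*B], [γB'X*A, R + γB'X*B]], and let S* be the unique symmetric positive definite solution of γ A_{F*} S A_{F*}' + Γ + (γ/(1−γ)) F̄* Σw (F̄*)' = S. Consider the feasible set 𝒯 := {(P, F) : P ∈ ℝ^{(n+m)×(n+m)} symmetric, F ∈ ℝ^{m×n} with ρ(A + BF) < 1, and γ A_F' P A_F + Λ = P}. Then (P*, F*) ∈ 𝒯, and for every (P, F) ∈ 𝒯 one has tr((Γ + (γ/(1−γ)) F̄ Σw F̄') P) ≥ tr((Γ + (γ/(1−γ)) F̄* Σw (F̄*)') P*), with equality if and only if P = P* and F = F*; moreover the optimal value equals tr(Λ S*). -/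

import Mathlib

open Matrix MeasureTheory Filter
open scoped ENNReal

/-- Spectral radius of a real square matrix: the maximum modulus of its complex
eigenvalues, expressed via the spectral radius of its complexification. -/
noncomputable def specRad {ι : Type*} [Fintype ι] [DecidableEq ι]
    (M : Matrix ι ι ℝ) : ℝ≥0∞ :=
  spectralRadius ℂ (M.map Complex.ofReal)

/-- The block matrix `A_F = [[A, B], [FA, FB]]`. -/
noncomputable def blockAF {n m : ℕ} (A : Matrix (Fin n) (Fin n) ℝ)
    (B : Matrix (Fin n) (Fin m) ℝ) (F : Matrix (Fin m) (Fin n) ℝ) :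
    Matrix (Fin n ⊕ Fin m) (Fin n ⊕ Fin m) ℝ :=
  Matrix.fromBlocks A B (F * A) (F * B)

/-- The block column matrix `F̄ = [I_n; F]`. -/
noncomputable def extendF {n m : ℕ} (F : Matrix (Fin m) (Fin n) ℝ) :
    Matrix (Fin n ⊕ Fin m) (Fin n) ℝ :=
  Matrix.fromRows (1 : Matrix (Fin n) (Fin n) ℝ) F

/-- The block diagonal matrix `Λ = diag(Q, R)`. -/
noncomputable def blockLam {n m : ℕ} (Q : Matrix (Fin n) (Fin n) ℝ)
    (R : Matrix (Fin m) (Fin m) ℝ) :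
    Matrix (Fin n ⊕ Fin m) (Fin n ⊕ Fin m) ℝ :=
  Matrix.fromBlocks Q 0 0 R

/-- The LQR gain `F = -γ (R + γ B' X B)⁻¹ B' X A` associated with `X`. -/
noncomputable def gainF {n m : ℕ} (A : Matrix (Fin n) (Fin n) ℝ)
    (B : Matrix (Fin n) (Fin m) ℝ) (R : Matrix (Fin m) (Fin m) ℝ)
    (γ : ℝ) (X : Matrix (Fin n) (Fin n) ℝ) : Matrix (Fin m) (Fin n) ℝ :=
  -(γ • ((R + γ • (Bᵀ * X * B))⁻¹ * (Bᵀ * X * A)))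

/-- `P = [[Q + γA'XA, γA'XB], [γB'XA, R + γB'XB]]`. -/
noncomputable def Pmat {n m : ℕ} (A : Matrix (Fin n) (Fin n) ℝ)
    (B : Matrix (Fin n) (Fin m) ℝ) (Q : Matrix (Fin n) (Fin n) ℝ)
    (R : Matrix (Fin m) (Fin m) ℝ) (γ : ℝ) (X : Matrix (Fin n) (Fin n) ℝ) :
    Matrix (Fin n ⊕ Fin m) (Fin n ⊕ Fin m) ℝ :=
  Matrix.fromBlocks (Q + γ • (Aᵀ * X * A)) (γ • (Aᵀ * X * B))
    (γ • (Bᵀ * X * A)) (R + γ • (Bᵀ * X * B))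

/-- `X` solves the discounted algebraic Riccati equation
`X = Q + γA'XA − γ²A'XB(R + γB'XB)⁻¹B'XA`. -/
def IsAREsol {n m : ℕ} (A : Matrix (Fin n) (Fin n) ℝ)
    (B : Matrix (Fin n) (Fin m) ℝ) (Q : Matrix (Fin n) (Fin n) ℝ)
    (R : Matrix (Fin m) (Fin m) ℝ) (γ : ℝ) (X : Matrix (Fin n) (Fin n) ℝ) : Prop :=
  X = Q + γ • (Aᵀ * X * A)
    - (γ ^ 2) • (Aᵀ * X * B * (R + γ • (Bᵀ * X * B))⁻¹ * (Bᵀ * X * A))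

/-!
For a feasible pair `(P, F)` put `X := F̄ᵀ P F̄`; the constraint says exactly that `P` is the block
matrix `Pmat` of `X`. Completing the square in the Riccati equation gives
`F̄ᵀ P* F̄ = X* + (F - F*)ᵀ H (F - F*)` with `H := R + γ Bᵀ X* B`, so `D := X - X*` solves the Stein
equation `D = γ (A + BF)ᵀ D (A + BF) + (F - F*)ᵀ H (F - F*)`, and stability of `√γ (A + BF)` forces
`D ≥ 0`. The objective gap is `tr (Γ (P - P*)) + c tr (Σw D)`, where `c := γ / (1 - γ)` and
`P - P* = γ [A B]ᵀ D [A B]`. Both terms are nonnegative, and if the second vanishes then `D = 0`,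
whence `P = P*` and `F = F*`. The optimal value is computed by pairing the Stein equations of
`S*` and `P*`, which are adjoint for the trace form.
-/

section SpectralRadius

theorem spectralRadius_smul {𝕜 𝔸 : Type*} [NormedField 𝕜] [Ring 𝔸] [Algebra 𝕜 𝔸] (k : 𝕜) (a : 𝔸) :
    spectralRadius 𝕜 (k • a) = ‖k‖ₑ * spectralRadius 𝕜 a := by
  rcases eq_or_ne k 0 with rfl | hk
  · simp
  · have hspec : spectrum 𝕜 (k • a) = (k * ·) '' spectrum 𝕜 a :=
      spectrum.unit_smul_eq_smul a (Units.mk0 k hk)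
    simp only [spectralRadius, hspec, iSup_image, nnnorm_mul, ENNReal.coe_mul, ENNReal.mul_iSup,
      enorm_eq_nnnorm]

theorem tendsto_pow_atTop_nhds_zero_of_spectralRadius_lt_one {𝔸 : Type*} [NormedRing 𝔸]
    [NormedAlgebra ℂ 𝔸] [CompleteSpace 𝔸] {a : 𝔸} (ha : spectralRadius ℂ a < 1) :
    Tendsto (fun k : ℕ => a ^ k) atTop (nhds 0) := by
  obtain ⟨r, har, hr⟩ := exists_between ha
  lift r to NNReal using hr.ne_top
  have hgelfand : ∀ᶠ k : ℕ in atTop, (‖a ^ k‖₊ : ℝ≥0∞) ^ (1 / k : ℝ) < r :=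
    (spectrum.pow_nnnorm_pow_one_div_tendsto_nhds_spectralRadius a).eventually_lt_const har
  have hbound : ∀ᶠ k : ℕ in atTop, ‖a ^ k‖ ≤ (r : ℝ) ^ k := by
    filter_upwards [hgelfand, eventually_gt_atTop 0] with k hk hk0
    rw [one_div, ENNReal.rpow_inv_lt_iff (by exact_mod_cast hk0), ENNReal.rpow_natCast] at hk
    exact_mod_cast hk.le
  exact squeeze_zero_norm' hbound
    (tendsto_pow_atTop_nhds_zero_of_lt_one r.2 (by exact_mod_cast hr))

variable {ι : Type*} [Fintype ι] [DecidableEq ι]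

theorem specRad_smul (t : ℝ) (M : Matrix ι ι ℝ) : specRad (t • M) = ‖t‖ₑ * specRad M := by
  have hmap : (t • M).map Complex.ofReal = (t : ℂ) • M.map Complex.ofReal := by
    ext i j
    simp
  rw [specRad, hmap, spectralRadius_smul, specRad, enorm_eq_nnnorm, Complex.nnnorm_real,
    enorm_eq_nnnorm]

variable {M : Matrix ι ι ℝ}

theorem specRad_sqrt_smul_lt_one {γ : ℝ} (hγ : γ ≤ 1) (hM : specRad M < 1) :
    specRad (√γ • M) < 1 := by
  have hsqrt : ‖√γ‖ₑ ≤ 1 := by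
    rw [Real.enorm_of_nonneg (Real.sqrt_nonneg γ), ENNReal.ofReal_le_one]
    exact Real.sqrt_le_one.mpr hγ
  rw [specRad_smul]
  exact (mul_le_of_le_one_left' hsqrt).trans_lt hM

attribute [local instance] Matrix.linftyOpNormedRing Matrix.linftyOpNormedAlgebra in
theorem tendsto_pow_atTop_nhds_zero_of_specRad_lt_one (hM : specRad M < 1) :
    Tendsto (fun k : ℕ => M ^ k) atTop (nhds 0) := by
  have hcomplex : Tendsto (fun k : ℕ => M.map Complex.ofReal ^ k) atTop (nhds 0) :=
    tendsto_pow_atTop_nhds_zero_of_spectralRadius_lt_one hM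
  have hpow (k : ℕ) : (M.map Complex.ofReal ^ k).map Complex.re = M ^ k := by
    have : M.map Complex.ofReal ^ k = (M ^ k).map Complex.ofReal :=
      (map_pow Complex.ofRealHom.mapMatrix M k).symm
    ext i j
    simp [this]
  have hre : Continuous fun C : Matrix ι ι ℂ => C.map Complex.re :=
    continuous_id.matrix_map Complex.continuous_re
  simpa [Function.comp_def, hpow] using (hre.tendsto 0).comp hcomplex

end SpectralRadius

section PosSemidef

open scoped ComplexOrder MatrixOrder

variable {𝕜 ι κ : Type*} [RCLike 𝕜]

theorem isClosed_setOf_posSemidef [Finite ι] : IsClosed {D : Matrix ι ι 𝕜 | D.PosSemidef} := by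
  cases nonempty_fintype ι
  simp only [posSemidef_iff_dotProduct_mulVec, Set.ofPred_and, Set.ofPred_forall]
  refine .inter (isClosed_eq (by fun_prop) continuous_id) (isClosed_iInter fun x => ?_)
  exact isClosed_le continuous_const (by fun_prop)

variable [Fintype ι]

theorem trace_mul_nonneg_of_posSemidef {S D : Matrix ι ι 𝕜} (hS : S.PosSemidef)
    (hD : D.PosSemidef) : 0 ≤ (S * D).trace := by
  classical
  obtain ⟨C, rfl⟩ := CStarAlgebra.nonneg_iff_eq_star_mul_self.mp hD.nonneg
  rw [← Matrix.mul_assoc, trace_mul_cycle]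
  exact (hS.mul_mul_conjTranspose_same C).trace_nonneg

theorem conjTranspose_mul_mul_eq_zero_iff_of_posDef {S : Matrix ι ι 𝕜} (hS : S.PosDef)
    {C : Matrix ι κ 𝕜} : Cᴴ * S * C = 0 ↔ C = 0 := by
  classical
  refine ⟨fun h => ?_, fun h => by rw [h, Matrix.mul_zero]⟩
  obtain ⟨Y, hY⟩ := CStarAlgebra.nonneg_iff_eq_star_mul_self.mp hS.posSemidef.nonneg
  rw [star_eq_conjTranspose] at hY
  have hYC : Y * C = 0 := by
    rw [← conjTranspose_mul_self_eq_zero, conjTranspose_mul, ← h, hY]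
    simp only [Matrix.mul_assoc]
  have hSC : S * C = 0 := by rw [hY, Matrix.mul_assoc, hYC, Matrix.mul_zero]
  have hdet : IsUnit S.det := (isUnit_iff_isUnit_det S).mp hS.isUnit
  rw [← nonsing_inv_mul_cancel_left S C hdet, hSC, Matrix.mul_zero]

theorem trace_mul_eq_zero_iff_of_posDef {S D : Matrix ι ι 𝕜} (hS : S.PosDef)
    (hD : D.PosSemidef) : (S * D).trace = 0 ↔ D = 0 := by
  classical
  obtain ⟨C, rfl⟩ := CStarAlgebra.nonneg_iff_eq_star_mul_self.mp hD.nonneg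
  have hCS : (C * S * Cᴴ).PosSemidef := hS.posSemidef.mul_mul_conjTranspose_same C
  have hC := conjTranspose_mul_mul_eq_zero_iff_of_posDef hS (C := Cᴴ)
  rw [conjTranspose_conjTranspose] at hC
  rw [star_eq_conjTranspose, ← Matrix.mul_assoc, trace_mul_cycle, hCS.trace_eq_zero_iff, hC,
    conjTranspose_mul_self_eq_zero, conjTranspose_eq_zero]

end PosSemidef

section SteinEquation

variable {ι : Type*} [Fintype ι]

theorem trace_mul_eq_trace_mul_of_stein {α : Type*} [CommRing α] {T S P W L : Matrix ι ι α} {γ : α}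
    (hS : γ • (T * S * Tᵀ) + W = S) (hP : γ • (Tᵀ * P * T) + L = P) :
    (W * P).trace = (L * S).trace := by
  have hadjoint : (T * S * Tᵀ * P).trace = (Tᵀ * P * T * S).trace := by
    rw [Matrix.mul_assoc, trace_mul_comm, ← Matrix.mul_assoc]
  rw [← eq_sub_iff_add_eq'] at hS hP
  rw [hS, hP, Matrix.sub_mul, Matrix.sub_mul, trace_sub, trace_sub, Matrix.smul_mul,
    Matrix.smul_mul, trace_smul, trace_smul, hadjoint, trace_mul_comm S P]

variable [DecidableEq ι]

theorem posSemidef_sub_pow_of_stein {M D N : Matrix ι ι ℝ} (hN : N.PosSemidef)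
    (hD : D = Mᵀ * D * M + N) (k : ℕ) : (D - (M ^ k)ᵀ * D * M ^ k).PosSemidef := by
  induction k with
  | zero => simpa using PosSemidef.zero
  | succ k ih =>
    have hstep : D - (M ^ (k + 1))ᵀ * D * M ^ (k + 1)
        = Mᵀ * (D - (M ^ k)ᵀ * D * M ^ k) * M + N := by
      rw [pow_succ, transpose_mul, Matrix.mul_sub, Matrix.sub_mul]
      simp only [Matrix.mul_assoc] at hD ⊢
      nth_rewrite 1 [hD]
      abel
    rw [hstep]
    exact (ih.conjTranspose_mul_mul_same M).add hN

theorem posSemidef_of_stein {M D N : Matrix ι ι ℝ} (hM : specRad M < 1) (hN : N.PosSemidef)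
    (hD : D = Mᵀ * D * M + N) : D.PosSemidef := by
  have hcont : Continuous fun T : Matrix ι ι ℝ => D - Tᵀ * D * T := by fun_prop
  have hlim : Tendsto (fun k : ℕ => D - (M ^ k)ᵀ * D * M ^ k) atTop (nhds D) := by
    simpa [Function.comp_def] using
      (hcont.tendsto 0).comp (tendsto_pow_atTop_nhds_zero_of_specRad_lt_one hM)
  exact isClosed_setOf_posSemidef.mem_of_tendsto hlim
    (.of_forall (posSemidef_sub_pow_of_stein hN hD))

theorem posSemidef_of_discounted_stein {M D N : Matrix ι ι ℝ} {γ : ℝ} (hγ : 0 ≤ γ)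
    (hM : specRad (√γ • M) < 1) (hN : N.PosSemidef) (hD : D = γ • (Mᵀ * D * M) + N) :
    D.PosSemidef := by
  refine posSemidef_of_stein hM hN ?_
  rw [transpose_smul, Matrix.smul_mul, Matrix.smul_mul, Matrix.mul_smul, smul_smul,
    Real.mul_self_sqrt hγ]
  exact hD

end SteinEquation

section Definitions

variable {n m : ℕ}

/-- Half the Hessian in the input `u` of the one-step cost `xᵀQx + uᵀRu + γ yᵀXy`, where
`y = Ax + Bu`. -/
noncomputable def inputHessian (B : Matrix (Fin n) (Fin m) ℝ) (R : Matrix (Fin m) (Fin m) ℝ)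
    (γ : ℝ) (X : Matrix (Fin n) (Fin n) ℝ) : Matrix (Fin m) (Fin m) ℝ :=
  R + γ • (Bᵀ * X * B)

/-- The matrix `F̄ᵀ P F̄` of the state value function obtained from the state-input quadratic form
`P` under the feedback `u = Fx`. -/
noncomputable def stateValue (F : Matrix (Fin m) (Fin n) ℝ)
    (P : Matrix (Fin n ⊕ Fin m) (Fin n ⊕ Fin m) ℝ) : Matrix (Fin n) (Fin n) ℝ :=
  (extendF F)ᵀ * P * extendF F

/-- `P` is the matrix of a state-input value function of the policy `u = Fx`: the equality
constraint `γ A_Fᵀ P A_F + Λ = P` of the dual problem. -/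
def IsPolicyValue (A : Matrix (Fin n) (Fin n) ℝ) (B : Matrix (Fin n) (Fin m) ℝ)
    (Q : Matrix (Fin n) (Fin n) ℝ) (R : Matrix (Fin m) (Fin m) ℝ) (γ : ℝ)
    (F : Matrix (Fin m) (Fin n) ℝ) (P : Matrix (Fin n ⊕ Fin m) (Fin n ⊕ Fin m) ℝ) : Prop :=
  γ • ((blockAF A B F)ᵀ * P * blockAF A B F) + blockLam Q R = P

/-- The weight `Γ + c F̄ Σw F̄ᵀ` against which `P` is paired in the objective; the discounted noise
contributes with `c = γ / (1 - γ)`. -/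
noncomputable def dualWeight (Γ : Matrix (Fin n ⊕ Fin m) (Fin n ⊕ Fin m) ℝ) (c : ℝ)
    (Sw : Matrix (Fin n) (Fin n) ℝ) (F : Matrix (Fin m) (Fin n) ℝ) :
    Matrix (Fin n ⊕ Fin m) (Fin n ⊕ Fin m) ℝ :=
  Γ + c • (extendF F * Sw * (extendF F)ᵀ)

end Definitions

section BlockIdentities

variable {n m : ℕ} (A : Matrix (Fin n) (Fin n) ℝ) (B : Matrix (Fin n) (Fin m) ℝ)
  (Q : Matrix (Fin n) (Fin n) ℝ) (R : Matrix (Fin m) (Fin m) ℝ) (γ : ℝ)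
  (X : Matrix (Fin n) (Fin n) ℝ) (F : Matrix (Fin m) (Fin n) ℝ)
  (P : Matrix (Fin n ⊕ Fin m) (Fin n ⊕ Fin m) ℝ)

theorem blockAF_eq_extendF_mul_fromCols : blockAF A B F = extendF F * fromCols A B := by
  rw [blockAF, extendF, fromRows_mul_fromCols, Matrix.one_mul, Matrix.one_mul]

theorem fromCols_mul_extendF : fromCols A B * extendF F = A + B * F := by
  rw [extendF, fromCols_mul_fromRows, Matrix.mul_one]

theorem Pmat_eq_blockLam_add :
    Pmat A B Q R γ X = blockLam Q R + γ • ((fromCols A B)ᵀ * X * fromCols A B) := by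
  rw [Pmat, blockLam, transpose_fromCols, fromRows_mul, fromRows_mul_fromCols, fromBlocks_smul,
    fromBlocks_add, zero_add, zero_add]

theorem Pmat_sub_Pmat (Y : Matrix (Fin n) (Fin n) ℝ) :
    Pmat A B Q R γ X - Pmat A B Q R γ Y = γ • ((fromCols A B)ᵀ * (X - Y) * fromCols A B) := by
  rw [Pmat_eq_blockLam_add, Pmat_eq_blockLam_add, add_sub_add_left_eq_sub, Matrix.mul_sub,
    Matrix.sub_mul, smul_sub]

theorem stateValue_sub (P' : Matrix (Fin n ⊕ Fin m) (Fin n ⊕ Fin m) ℝ) :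
    stateValue F (P - P') = stateValue F P - stateValue F P' := by
  rw [stateValue, Matrix.mul_sub, Matrix.sub_mul, stateValue, stateValue]

theorem stateValue_smul_fromCols :
    stateValue F (γ • ((fromCols A B)ᵀ * X * fromCols A B))
      = γ • ((A + B * F)ᵀ * X * (A + B * F)) := by
  rw [stateValue, ← fromCols_mul_extendF, transpose_mul]
  simp only [Matrix.mul_smul, Matrix.smul_mul, Matrix.mul_assoc]

theorem stateValue_Pmat :
    stateValue F (Pmat A B Q R γ X)
      = Q + γ • (Aᵀ * X * A) + γ • (Aᵀ * X * B) * F + Fᵀ * (γ • (Bᵀ * X * A))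
        + Fᵀ * inputHessian B R γ X * F := by
  rw [stateValue, extendF, Pmat, transpose_fromRows, Matrix.mul_assoc, fromBlocks_mul_fromRows,
    fromCols_mul_fromRows, inputHessian]
  simp only [transpose_one, Matrix.one_mul, Matrix.mul_one, Matrix.mul_add, Matrix.add_mul,
    Matrix.mul_assoc]
  abel

theorem isPolicyValue_iff_Pmat_stateValue :
    IsPolicyValue A B Q R γ F P ↔ Pmat A B Q R γ (stateValue F P) = P := by
  rw [IsPolicyValue, Pmat_eq_blockLam_add, blockAF_eq_extendF_mul_fromCols, transpose_mul,
    stateValue, add_comm]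
  simp only [Matrix.mul_assoc]

theorem trace_dualWeight_mul (Γ : Matrix (Fin n ⊕ Fin m) (Fin n ⊕ Fin m) ℝ) (c : ℝ)
    (Sw : Matrix (Fin n) (Fin n) ℝ) :
    (dualWeight Γ c Sw F * P).trace = (Γ * P).trace + c * (Sw * stateValue F P).trace := by
  have hcycle : (extendF F * Sw * (extendF F)ᵀ * P).trace = (Sw * stateValue F P).trace := by
    rw [stateValue, Matrix.mul_assoc, Matrix.mul_assoc, trace_mul_comm]
    simp only [Matrix.mul_assoc]
  rw [dualWeight, Matrix.add_mul, trace_add, Matrix.smul_mul, trace_smul, smul_eq_mul, hcycle]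

end BlockIdentities

section Riccati

variable {n m : ℕ} {A : Matrix (Fin n) (Fin n) ℝ} {B : Matrix (Fin n) (Fin m) ℝ}
  {Q : Matrix (Fin n) (Fin n) ℝ} {R : Matrix (Fin m) (Fin m) ℝ} {γ : ℝ}
  {X : Matrix (Fin n) (Fin n) ℝ} {F : Matrix (Fin m) (Fin n) ℝ}
  {P : Matrix (Fin n ⊕ Fin m) (Fin n ⊕ Fin m) ℝ}

theorem posDef_inputHessian (hR : R.PosDef) (hγ : 0 ≤ γ) (hX : X.PosSemidef) :
    (inputHessian B R γ X).PosDef :=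
  hR.add_posSemidef ((hX.conjTranspose_mul_mul_same B).smul hγ)

theorem inputHessian_mul_gainF (hHdet : IsUnit (inputHessian B R γ X).det) :
    inputHessian B R γ X * gainF A B R γ X = -(γ • (Bᵀ * X * A)) := by
  rw [gainF, ← inputHessian, Matrix.mul_neg, Matrix.mul_smul,
    mul_nonsing_inv_cancel_left _ _ hHdet]

theorem transpose_gainF_mul_inputHessian (hX : X.IsSymm) (hHsymm : (inputHessian B R γ X).IsSymm)
    (hHdet : IsUnit (inputHessian B R γ X).det) :
    (gainF A B R γ X)ᵀ * inputHessian B R γ X = -(γ • (Aᵀ * X * B)) := by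
  have := congrArg transpose (inputHessian_mul_gainF (A := A) hHdet)
  simpa [hHsymm.eq, hX.eq, Matrix.mul_assoc] using this

namespace IsAREsol

theorem add_gainF_eq (hARE : IsAREsol A B Q R γ X) (hX : X.IsSymm)
    (hHsymm : (inputHessian B R γ X).IsSymm) (hHdet : IsUnit (inputHessian B R γ X).det) :
    X + (gainF A B R γ X)ᵀ * inputHessian B R γ X * gainF A B R γ X = Q + γ • (Aᵀ * X * A) := by
  have hquad : (gainF A B R γ X)ᵀ * inputHessian B R γ X * gainF A B R γ X
      = γ ^ 2 • (Aᵀ * X * B * (R + γ • (Bᵀ * X * B))⁻¹ * (Bᵀ * X * A)) := by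
    rw [transpose_gainF_mul_inputHessian hX hHsymm hHdet, gainF]
    simp only [Matrix.neg_mul, Matrix.mul_neg, Matrix.smul_mul, Matrix.mul_smul, smul_neg,
      neg_neg, smul_smul, pow_two, Matrix.mul_assoc]
  rw [hquad]
  exact eq_sub_iff_add_eq.mp hARE

theorem stateValue_Pmat_eq_add_sq (hARE : IsAREsol A B Q R γ X) (hX : X.IsSymm)
    (hHsymm : (inputHessian B R γ X).IsSymm) (hHdet : IsUnit (inputHessian B R γ X).det)
    (F : Matrix (Fin m) (Fin n) ℝ) :
    stateValue F (Pmat A B Q R γ X)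
      = X + (F - gainF A B R γ X)ᵀ * inputHessian B R γ X * (F - gainF A B R γ X) := by
  have hBXA := neg_eq_iff_eq_neg.mpr (inputHessian_mul_gainF (A := A) hHdet)
  have hAXB := neg_eq_iff_eq_neg.mpr (transpose_gainF_mul_inputHessian (A := A) hX hHsymm hHdet)
  rw [stateValue_Pmat, ← hBXA, ← hAXB, ← hARE.add_gainF_eq hX hHsymm hHdet, transpose_sub]
  simp only [Matrix.sub_mul, Matrix.mul_sub, Matrix.neg_mul, Matrix.mul_neg, Matrix.mul_assoc]
  abel

theorem stateValue_gainF_Pmat (hARE : IsAREsol A B Q R γ X) (hX : X.IsSymm)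
    (hHsymm : (inputHessian B R γ X).IsSymm) (hHdet : IsUnit (inputHessian B R γ X).det) :
    stateValue (gainF A B R γ X) (Pmat A B Q R γ X) = X := by
  rw [hARE.stateValue_Pmat_eq_add_sq hX hHsymm hHdet, sub_self, Matrix.mul_zero, add_zero]

theorem isPolicyValue_Pmat (hARE : IsAREsol A B Q R γ X) (hX : X.IsSymm)
    (hHsymm : (inputHessian B R γ X).IsSymm) (hHdet : IsUnit (inputHessian B R γ X).det) :
    IsPolicyValue A B Q R γ (gainF A B R γ X) (Pmat A B Q R γ X) := by
  rw [isPolicyValue_iff_Pmat_stateValue, hARE.stateValue_gainF_Pmat hX hHsymm hHdet]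

theorem stateValue_sub_eq_stein (hARE : IsAREsol A B Q R γ X) (hX : X.IsSymm)
    (hHsymm : (inputHessian B R γ X).IsSymm) (hHdet : IsUnit (inputHessian B R γ X).det)
    (hP : IsPolicyValue A B Q R γ F P) :
    stateValue F P - X = γ • ((A + B * F)ᵀ * (stateValue F P - X) * (A + B * F))
      + (F - gainF A B R γ X)ᵀ * inputHessian B R γ X * (F - gainF A B R γ X) := by
  rw [isPolicyValue_iff_Pmat_stateValue] at hP
  rw [← stateValue_smul_fromCols, ← Pmat_sub_Pmat A B Q R, hP, stateValue_sub,
    hARE.stateValue_Pmat_eq_add_sq hX hHsymm hHdet]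
  abel

theorem posSemidef_stateValue_sub (hARE : IsAREsol A B Q R γ X) (hγ : 0 ≤ γ) (hX : X.IsSymm)
    (hH : (inputHessian B R γ X).PosDef) (hF : specRad (√γ • (A + B * F)) < 1)
    (hP : IsPolicyValue A B Q R γ F P) : (stateValue F P - X).PosSemidef := by
  have hHdet := (isUnit_iff_isUnit_det _).mp hH.isUnit
  have hsq : ((F - gainF A B R γ X)ᵀ * inputHessian B R γ X
      * (F - gainF A B R γ X)).PosSemidef :=
    hH.posSemidef.conjTranspose_mul_mul_same _
  exact posSemidef_of_discounted_stein hγ hF hsq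
    (hARE.stateValue_sub_eq_stein hX hH.isHermitian hHdet hP)

theorem eq_Pmat_and_eq_gainF_iff (hARE : IsAREsol A B Q R γ X) (hX : X.IsSymm)
    (hH : (inputHessian B R γ X).PosDef) (hP : IsPolicyValue A B Q R γ F P) :
    P = Pmat A B Q R γ X ∧ F = gainF A B R γ X ↔ stateValue F P = X := by
  have hHdet := (isUnit_iff_isUnit_det _).mp hH.isUnit
  refine ⟨?_, fun hXP => ⟨?_, ?_⟩⟩
  · rintro ⟨rfl, rfl⟩
    exact hARE.stateValue_gainF_Pmat hX hH.isHermitian hHdet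
  · rw [← hXP]
    exact ((isPolicyValue_iff_Pmat_stateValue ..).mp hP).symm
  · have hstein := hARE.stateValue_sub_eq_stein hX hH.isHermitian hHdet hP
    rw [hXP, sub_self, Matrix.mul_zero, Matrix.zero_mul, smul_zero, zero_add] at hstein
    exact sub_eq_zero.mp ((conjTranspose_mul_mul_eq_zero_iff_of_posDef hH).mp hstein.symm)

theorem trace_dualWeight_mul_sub (hARE : IsAREsol A B Q R γ X) (hX : X.IsSymm)
    (hHsymm : (inputHessian B R γ X).IsSymm) (hHdet : IsUnit (inputHessian B R γ X).det)
    (Γ : Matrix (Fin n ⊕ Fin m) (Fin n ⊕ Fin m) ℝ) (c : ℝ) (Sw : Matrix (Fin n) (Fin n) ℝ) :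
    (dualWeight Γ c Sw F * P).trace
        - (dualWeight Γ c Sw (gainF A B R γ X) * Pmat A B Q R γ X).trace
      = (Γ * (P - Pmat A B Q R γ X)).trace + c * (Sw * (stateValue F P - X)).trace := by
  rw [trace_dualWeight_mul, trace_dualWeight_mul, hARE.stateValue_gainF_Pmat hX hHsymm hHdet,
    Matrix.mul_sub, Matrix.mul_sub, trace_sub, trace_sub]
  ring

theorem trace_dualWeight_mul_le_and_eq_iff (hARE : IsAREsol A B Q R γ X) (hγ : 0 ≤ γ)
    (hX : X.IsSymm) (hH : (inputHessian B R γ X).PosDef)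
    {Γ : Matrix (Fin n ⊕ Fin m) (Fin n ⊕ Fin m) ℝ} (hΓ : Γ.PosSemidef) {c : ℝ} (hc : 0 < c)
    {Sw : Matrix (Fin n) (Fin n) ℝ} (hSw : Sw.PosDef)
    (hF : specRad (√γ • (A + B * F)) < 1) (hP : IsPolicyValue A B Q R γ F P) :
    (dualWeight Γ c Sw (gainF A B R γ X) * Pmat A B Q R γ X).trace
        ≤ (dualWeight Γ c Sw F * P).trace
      ∧ ((dualWeight Γ c Sw F * P).trace
          = (dualWeight Γ c Sw (gainF A B R γ X) * Pmat A B Q R γ X).trace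
        ↔ P = Pmat A B Q R γ X ∧ F = gainF A B R γ X) := by
  have hgap := hARE.trace_dualWeight_mul_sub (F := F) (P := P) hX hH.isHermitian
    ((isUnit_iff_isUnit_det _).mp hH.isUnit) Γ c Sw
  have hD : (stateValue F P - X).PosSemidef := hARE.posSemidef_stateValue_sub hγ hX hH hF hP
  have hPdiff : (P - Pmat A B Q R γ X).PosSemidef := by
    rw [← (isPolicyValue_iff_Pmat_stateValue ..).mp hP, Pmat_sub_Pmat]
    exact (hD.conjTranspose_mul_mul_same _).smul hγ
  have hΓtrace : 0 ≤ (Γ * (P - Pmat A B Q R γ X)).trace :=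
    trace_mul_nonneg_of_posSemidef hΓ hPdiff
  have hSwtrace : 0 ≤ c * (Sw * (stateValue F P - X)).trace :=
    mul_nonneg hc.le (trace_mul_nonneg_of_posSemidef hSw.posSemidef hD)
  refine ⟨by linarith, fun heq => ?_, fun ⟨hP', hF'⟩ => by rw [hP', hF']⟩
  have hzero : c * (Sw * (stateValue F P - X)).trace = 0 := by linarith
  rw [hARE.eq_Pmat_and_eq_gainF_iff hX hH hP, ← sub_eq_zero,
    ← trace_mul_eq_zero_iff_of_posDef hSw hD]
  exact (mul_eq_zero.mp hzero).resolve_left hc.ne'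

end IsAREsol

end Riccati

theorem dual_problem_unique_minimizer_general {n m : ℕ}
    {A : Matrix (Fin n) (Fin n) ℝ} {B : Matrix (Fin n) (Fin m) ℝ}
    {Q : Matrix (Fin n) (Fin n) ℝ} {R : Matrix (Fin m) (Fin m) ℝ} {γ : ℝ} (hγ : 0 ≤ γ)
    {c : ℝ} (hc : 0 < c) {Sw : Matrix (Fin n) (Fin n) ℝ} (hSw : Sw.PosDef)
    {Γ : Matrix (Fin n ⊕ Fin m) (Fin n ⊕ Fin m) ℝ} (hΓ : Γ.PosSemidef)
    {X : Matrix (Fin n) (Fin n) ℝ} (hX : X.IsSymm) (hH : (inputHessian B R γ X).PosDef)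
    (hARE : IsAREsol A B Q R γ X)
    {S : Matrix (Fin n ⊕ Fin m) (Fin n ⊕ Fin m) ℝ}
    (hS : γ • (blockAF A B (gainF A B R γ X) * S * (blockAF A B (gainF A B R γ X))ᵀ)
      + dualWeight Γ c Sw (gainF A B R γ X) = S) :
    IsPolicyValue A B Q R γ (gainF A B R γ X) (Pmat A B Q R γ X)
    ∧ (∀ (P : Matrix (Fin n ⊕ Fin m) (Fin n ⊕ Fin m) ℝ) (F : Matrix (Fin m) (Fin n) ℝ),
        specRad (√γ • (A + B * F)) < 1 → IsPolicyValue A B Q R γ F P →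
        (dualWeight Γ c Sw (gainF A B R γ X) * Pmat A B Q R γ X).trace
            ≤ (dualWeight Γ c Sw F * P).trace
          ∧ ((dualWeight Γ c Sw F * P).trace
              = (dualWeight Γ c Sw (gainF A B R γ X) * Pmat A B Q R γ X).trace
              ↔ P = Pmat A B Q R γ X ∧ F = gainF A B R γ X))
    ∧ (dualWeight Γ c Sw (gainF A B R γ X) * Pmat A B Q R γ X).trace
        = (blockLam Q R * S).trace := by
  have hPstar := hARE.isPolicyValue_Pmat hX hH.isHermitian
    ((isUnit_iff_isUnit_det _).mp hH.isUnit)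
  exact ⟨hPstar,
    fun P F hF hP => hARE.trace_dualWeight_mul_le_and_eq_iff hγ hX hH hΓ hc hSw hF hP,
    trace_mul_eq_trace_mul_of_stein hS hPstar⟩

theorem dual_problem_unique_minimizer (n m : ℕ) (hn : 0 < n) (hm : 0 < m)
    (A : Matrix (Fin n) (Fin n) ℝ) (B : Matrix (Fin n) (Fin m) ℝ)
    (Q : Matrix (Fin n) (Fin n) ℝ) (R : Matrix (Fin m) (Fin m) ℝ)
    (hQ : Q.PosSemidef) (hR : R.PosDef)
    (γ : ℝ) (hγ0 : 0 < γ) (hγ1 : γ < 1)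
    (Sw : Matrix (Fin n) (Fin n) ℝ) (hSw : Sw.PosDef)
    (Γ : Matrix (Fin n ⊕ Fin m) (Fin n ⊕ Fin m) ℝ) (hΓ : Γ.PosDef)
    (Xstar : Matrix (Fin n) (Fin n) ℝ) (hXstar : Xstar.PosSemidef)
    (hARE : IsAREsol A B Q R γ Xstar)
    (hXuniq : ∀ Y : Matrix (Fin n) (Fin n) ℝ,
      Y.PosSemidef → IsAREsol A B Q R γ Y → Y = Xstar)
    (hstab : specRad (A + B * gainF A B R γ Xstar) < 1)
    (Sstar : Matrix (Fin n ⊕ Fin m) (Fin n ⊕ Fin m) ℝ) (hSstar : Sstar.PosDef)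
    (hSstareq : γ • (blockAF A B (gainF A B R γ Xstar) * Sstar
          * (blockAF A B (gainF A B R γ Xstar))ᵀ) + Γ
        + (γ / (1 - γ)) • (extendF (gainF A B R γ Xstar) * Sw
          * (extendF (gainF A B R γ Xstar))ᵀ) = Sstar) :
    (γ • ((blockAF A B (gainF A B R γ Xstar))ᵀ * Pmat A B Q R γ Xstar
          * blockAF A B (gainF A B R γ Xstar)) + blockLam Q R = Pmat A B Q R γ Xstar)
    ∧ (∀ (P : Matrix (Fin n ⊕ Fin m) (Fin n ⊕ Fin m) ℝ)
        (F : Matrix (Fin m) (Fin n) ℝ),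
        P.IsSymm → specRad (A + B * F) < 1 →
        γ • ((blockAF A B F)ᵀ * P * blockAF A B F) + blockLam Q R = P →
        ((Γ + (γ / (1 - γ)) • (extendF (gainF A B R γ Xstar) * Sw
              * (extendF (gainF A B R γ Xstar))ᵀ)) * Pmat A B Q R γ Xstar).trace
            ≤ ((Γ + (γ / (1 - γ)) • (extendF F * Sw * (extendF F)ᵀ)) * P).trace
          ∧ (((Γ + (γ / (1 - γ)) • (extendF F * Sw * (extendF F)ᵀ)) * P).trace
              = ((Γ + (γ / (1 - γ)) • (extendF (gainF A B R γ Xstar) * Sw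
                  * (extendF (gainF A B R γ Xstar))ᵀ)) * Pmat A B Q R γ Xstar).trace
              ↔ P = Pmat A B Q R γ Xstar ∧ F = gainF A B R γ Xstar))
    ∧ ((Γ + (γ / (1 - γ)) • (extendF (gainF A B R γ Xstar) * Sw
          * (extendF (gainF A B R γ Xstar))ᵀ)) * Pmat A B Q R γ Xstar).trace
        = (blockLam Q R * Sstar).trace := by
  obtain ⟨hfeasible, hmin, hvalue⟩ := dual_problem_unique_minimizer_general hγ0.le
    (div_pos hγ0 (sub_pos.mpr hγ1)) hSw hΓ.posSemidef hXstar.isHermitian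
    (posDef_inputHessian hR hγ0.le hXstar) hARE ((add_assoc _ _ _).symm.trans hSstareq)
  exact ⟨hfeasible, fun P F _ hF hP => hmin P F (specRad_sqrt_smul_lt_one hγ1.le hF) hP, hvalue⟩
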